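/- Variance bound (eqs. (70)–(72)): For every integer N_t ≥ 2 and every real B ≥ 0, setting n = 2^B, B̄ = B/N_t, and s = 1/(N_t − 1), the quantity var[ν] := n·Beta(n, 1 + 2s) − n²·Beta(n, 1 + s)² satisfies var[ν] ≤ 2^{−2B̄(1 + s)}·( Γ(1 + 2s) − Γ(1 + s)²·(1 + 1/n)^{−2s} ). -/

import Mathlib

/-- The Euler Beta function `Beta(x,y) = ∫₀¹ t^{x-1} (1-t)^{y-1} dt`. -/
noncomputable def Beta (x y : ℝ) : ℝ := ∫ t in (0:ℝ)..1, t ^ (x - 1) * (1 - t) ^ (y - 1)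

theorem aux_Beta_eq (x y : ℝ) (hx : 0 < x) (hy : 0 < y) :
    Beta x y = Real.Gamma x * Real.Gamma y / Real.Gamma (x + y) := by
  have h := ProbabilityTheory.beta_eq_betaIntegralReal x y hx hy
  have h2 : Complex.betaIntegral x y = ((Beta x y : ℝ) : ℂ) := by
    unfold Complex.betaIntegral Beta
    rw [← intervalIntegral.integral_ofReal]
    apply intervalIntegral.integral_congr
    intro t ht
    rw [Set.uIcc_of_le zero_le_one] at ht
    have h0 : (0:ℝ) ≤ t := ht.1
    have h1 : (0:ℝ) ≤ 1 - t := by linarith [ht.2]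
    simp only [Complex.ofReal_mul, Complex.ofReal_cpow h0, Complex.ofReal_cpow h1]
    push_cast
    rfl
  rw [h2, Complex.ofReal_re] at h
  rw [← h]
  rfl

theorem aux_feq (y : ℝ) (hy : 0 < y) :
    Real.log (Real.Gamma (y + 1)) = Real.log (Real.Gamma y) + Real.log y := by
  rw [Real.Gamma_add_one hy.ne', Real.log_mul hy.ne' (Real.Gamma_pos_of_pos hy).ne', add_comm]

theorem aux_lower (n t : ℝ) (hn : 0 < n) (ht : 0 < t) :
    n ^ t * Real.Gamma (n + 1) ≤ Real.Gamma (n + 1 + t) := by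
  have c := Real.convexOn_log_Gamma.slope_mono_adjacent (x := n) (y := n + 1) (z := n + 1 + t)
    hn (show 0 < n + 1 + t by linarith) (by linarith) (by linarith)
  simp only [Function.comp, aux_feq n hn] at c
  rw [add_sub_cancel_left, add_sub_cancel_left, add_sub_cancel_left, div_one, le_div_iff₀ ht] at c
  have g1 := Real.Gamma_pos_of_pos (show 0 < n + 1 by linarith)
  have g2 := Real.Gamma_pos_of_pos (show 0 < n + 1 + t by linarith)
  have p := Real.rpow_pos_of_pos hn t
  rw [← Real.log_le_log_iff (by positivity) g2, Real.log_mul p.ne' g1.ne', Real.log_rpow hn,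
    aux_feq n hn]
  linarith

theorem aux_upper (m s : ℝ) (hm : 0 < m) (hs : 0 < s) (hs1 : s ≤ 1) :
    Real.Gamma (m + s) ≤ m ^ s * Real.Gamma m := by
  have c := Real.convexOn_log_Gamma.2 (x := m) (y := m + 1) hm (show 0 < m + 1 by linarith)
    (show 0 ≤ 1 - s by linarith) hs.le (by ring)
  simp only [Function.comp, smul_eq_mul, aux_feq m hm] at c
  rw [show (1 - s) * m + s * (m + 1) = m + s by ring] at c
  have g1 := Real.Gamma_pos_of_pos hm
  have g2 := Real.Gamma_pos_of_pos (show 0 < m + s by linarith)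
  have p := Real.rpow_pos_of_pos hm s
  rw [← Real.log_le_log_iff g2 (by positivity), Real.log_mul p.ne' g1.ne', Real.log_rpow hm]
  linarith

theorem aux_main (n s : ℝ) (hn : 0 < n) (hs : 0 < s) (hs1 : s ≤ 1) :
    n * Beta n (1 + 2 * s) - n ^ 2 * (Beta n (1 + s)) ^ 2 ≤
      n ^ (-(2 * s)) * (Real.Gamma (1 + 2 * s) -
        (Real.Gamma (1 + s)) ^ 2 * (1 + 1 / n) ^ (-(2 * s))) := by
  have hB : ∀ t : ℝ, 0 < t → n * Beta n (1 + t) =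
      Real.Gamma (1 + t) * (Real.Gamma (n + 1) / Real.Gamma (n + 1 + t)) := by
    intro t ht
    rw [aux_Beta_eq n (1 + t) hn (by linarith), Real.Gamma_add_one hn.ne', ← add_assoc]
    ring
  have g0 := Real.Gamma_pos_of_pos (show 0 < n + 1 by linarith)
  have e1 : Real.Gamma (n + 1) / Real.Gamma (n + 1 + 2 * s) ≤ n ^ (-(2 * s)) := by
    have g2 := Real.Gamma_pos_of_pos (show 0 < n + 1 + 2 * s by linarith)
    have := aux_lower n (2 * s) hn (by linarith)
    have p := Real.rpow_pos_of_pos hn (2 * s)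
    rw [Real.rpow_neg hn.le, div_le_iff₀ g2, inv_mul_eq_div, le_div_iff₀ p]
    linarith
  have e2 : (n + 1) ^ (-s) ≤ Real.Gamma (n + 1) / Real.Gamma (n + 1 + s) := by
    have g2 := Real.Gamma_pos_of_pos (show 0 < n + 1 + s by linarith)
    have := aux_upper (n + 1) s (by linarith) hs hs1
    have p := Real.rpow_pos_of_pos (show 0 < n + 1 by linarith) s
    rw [Real.rpow_neg (by linarith), le_div_iff₀ g2, inv_mul_eq_div, div_le_iff₀ p]
    linarith
  have e3 : n ^ (-(2 * s)) * (1 + 1 / n) ^ (-(2 * s)) = ((n + 1) ^ (-s)) ^ 2 := by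
    rw [← Real.mul_rpow hn.le (by positivity), ← Real.rpow_mul_natCast (by linarith)]
    congr 1
    · field_simp
    · push_cast; ring
  have p := Real.rpow_pos_of_pos (show 0 < n + 1 by linarith) (-s)
  have e4 := pow_le_pow_left₀ p.le e2 2
  have e5 := mul_le_mul_of_nonneg_left e4 (sq_nonneg (Real.Gamma (1 + s)))
  have e6 := mul_le_mul_of_nonneg_left e1
    (Real.Gamma_pos_of_pos (show 0 < 1 + 2 * s by linarith)).le
  rw [← mul_pow n, hB s hs, hB (2 * s) (by linarith), mul_pow]
  rw [← e3] at e5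
  linarith

/-- Variance bound (eqs. (70)–(72)): for every integer `N_t ≥ 2` and every real `B ≥ 0`,
setting `n = 2^B`, `B̄ = B/N_t`, `s = 1/(N_t−1)`,
`var[ν] = n·Beta(n, 1+2s) − n²·Beta(n, 1+s)²` satisfies
`var[ν] ≤ 2^{−2B̄(1+s)}·(Γ(1+2s) − Γ(1+s)²·(1 + 1/n)^{−2s})`. -/
theorem rvq_variance_bound (Nt : ℕ) (hNt : 2 ≤ Nt) (B : ℝ) (hB : 0 ≤ B) :
    (2:ℝ) ^ B * Beta ((2:ℝ) ^ B) (1 + 2 * (1 / ((Nt : ℝ) - 1))) -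
        ((2:ℝ) ^ B) ^ 2 * (Beta ((2:ℝ) ^ B) (1 + 1 / ((Nt : ℝ) - 1))) ^ 2 ≤
      (2:ℝ) ^ (-(2 * (B / (Nt : ℝ)) * (1 + 1 / ((Nt : ℝ) - 1)))) *
        (Real.Gamma (1 + 2 * (1 / ((Nt : ℝ) - 1))) -
          (Real.Gamma (1 + 1 / ((Nt : ℝ) - 1))) ^ 2 *
            (1 + 1 / (2:ℝ) ^ B) ^ (-(2 * (1 / ((Nt : ℝ) - 1))))) := by
  have hN : (2:ℝ) ≤ (Nt : ℝ) := by exact_mod_cast hNt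
  have h := aux_main ((2:ℝ) ^ B) (1 / ((Nt : ℝ) - 1)) (by positivity)
    (by apply one_div_pos.mpr; linarith) (by rw [div_le_one] <;> linarith)
  rw [← Real.rpow_mul (by norm_num : (0:ℝ) ≤ 2)] at h
  have e : -(2 * (B / (Nt : ℝ)) * (1 + 1 / ((Nt : ℝ) - 1))) = B * -(2 * (1 / ((Nt : ℝ) - 1))) := by
    have h1 : (Nt : ℝ) - 1 ≠ 0 := by linarith
    have h2 : (Nt : ℝ) ≠ 0 := by linarith
    field_simp
    ring
  rw [e]
  exact h
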